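/- Let σ be a linear automorphism of V and let (δ_{i,r}, δ_{i,l})_{i≥1} satisfy the sequence-pair recurrence for σ. Then for every integer d ≥ 1, ∑_{i=1}^{d} (−1)^i (δ_{i,r} ⊗ id_V^{⊗(d−i)}) = (−1)^{d+1} ∑_{i=1}^{d} (−1)^i (σ^{⊗(d−i)} ⊗ δ_{i,l}) as linear maps V^{⊗d} → V^{⊗(d+1)}. -/

import Mathlib

open scoped TensorProduct
open PiTensorProduct

namespace OrePaper

variable (k : Type*) [Field k] (V : Type*) [AddCommGroup V] [Module k V]

/-- The canonical isomorphism `V^{⊗a} ⊗ V^{⊗b} ≃ V^{⊗(a+b)}`. -/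
noncomputable abbrev mulPow (a b : ℕ) :
    ((⨂[k]^a V) ⊗[k] (⨂[k]^b V)) ≃ₗ[k] ⨂[k]^(a+b) V :=
  TensorPower.mulEquiv

variable {k V}

/-- `f ⊗ g` for linear maps between tensor powers, under the canonical identifications. -/
noncomputable def tmap {a b c d : ℕ} (f : (⨂[k]^a V) →ₗ[k] ⨂[k]^c V)
    (g : (⨂[k]^b V) →ₗ[k] ⨂[k]^d V) :
    (⨂[k]^(a+b) V) →ₗ[k] ⨂[k]^(c+d) V :=
  (mulPow k V c d).toLinearMap ∘ₗ TensorProduct.map f g ∘ₗ (mulPow k V a b).symm.toLinearMap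

/-- Transport a linear map between tensor powers along equalities of exponents
(the canonical associativity identifications). -/
noncomputable def conv {a b a' b' : ℕ} (h1 : a = a') (h2 : b = b')
    (f : (⨂[k]^a V) →ₗ[k] ⨂[k]^b V) : (⨂[k]^a' V) →ₗ[k] ⨂[k]^b' V :=
  (TensorPower.cast k V h2).toLinearMap ∘ₗ f ∘ₗ (TensorPower.cast k V h1.symm).toLinearMap

/-- `f^{⊗n}` for a linear endomorphism `f` of `V`. -/
noncomputable def pmap (f : V →ₗ[k] V) (n : ℕ) : (⨂[k]^n V) →ₗ[k] ⨂[k]^n V :=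
  PiTensorProduct.map (fun _ => f)

/-- A family `(δ_{i,r}, δ_{i,l})_{i ≥ 1}` of linear maps
`δ_{i,r} : V^{⊗i} → V^{⊗i} ⊗ V` and `δ_{i,l} : V^{⊗i} → V ⊗ V^{⊗i}` (written, under the
canonical identifications, as maps `V^{⊗i} → V^{⊗(i+1)}`) satisfies the *sequence-pair
recurrence* for a linear automorphism `σ` of `V` if `δ_{1,r} = δ_{1,l}` and, for all `i ≥ 2`,
`δ_{i,r} + (-1)^i δ_{i,l} = σ ⊗ δ_{i-1,r} + (-1)^i (δ_{i-1,l} ⊗ id_V)`. -/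
def SeqPairRec (σ : V ≃ₗ[k] V)
    (δr δl : (i : ℕ) → (⨂[k]^i V) →ₗ[k] ⨂[k]^(i+1) V) : Prop :=
  δr 1 = δl 1 ∧
  ∀ (i : ℕ) (hi : 2 ≤ i),
    δr i + ((-1 : k)^i) • δl i
      = conv (by omega) (by omega) (tmap (pmap σ.toLinearMap 1) (δr (i-1)))
        + ((-1 : k)^i) • conv (by omega) (by omega) (tmap (δl (i-1)) (pmap (LinearMap.id) 1))

theorem tmap_mul {a b c d : ℕ} (f : (⨂[k]^a V) →ₗ[k] ⨂[k]^c V)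
    (g : (⨂[k]^b V) →ₗ[k] ⨂[k]^d V) (x : ⨂[k]^a V) (y : ⨂[k]^b V) :
    tmap f g (mulPow k V a b (x ⊗ₜ y)) = mulPow k V c d (f x ⊗ₜ g y) := by
  simp [tmap]

theorem hom_ext {a b : ℕ} {M : Type*} [AddCommGroup M] [Module k M]
    {F G : (⨂[k]^(a+b) V) →ₗ[k] M}
    (h : ∀ x y, F (mulPow k V a b (x ⊗ₜ y)) = G (mulPow k V a b (x ⊗ₜ y))) : F = G := by
  have : F ∘ₗ (mulPow k V a b).toLinearMap = G ∘ₗ (mulPow k V a b).toLinearMap :=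
    TensorProduct.ext' (fun x y => h x y)
  ext1
  ext v
  have h2 := LinearMap.congr_fun this ((mulPow k V a b).symm (tprod k v))
  simpa using h2

theorem hom_ext3 {a b c : ℕ} {M : Type*} [AddCommGroup M] [Module k M]
    {F G : (⨂[k]^(a+b+c) V) →ₗ[k] M}
    (h : ∀ x y z, F (mulPow k V _ c (mulPow k V a b (x ⊗ₜ y) ⊗ₜ z))
      = G (mulPow k V _ c (mulPow k V a b (x ⊗ₜ y) ⊗ₜ z))) : F = G := by
  refine hom_ext (fun w z => ?_)
  have : F ∘ₗ (mulPow k V (a+b) c).toLinearMap ∘ₗ (TensorProduct.mk k _ _).flip z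
      = G ∘ₗ (mulPow k V (a+b) c).toLinearMap ∘ₗ (TensorProduct.mk k _ _).flip z :=
    hom_ext (fun x y => h x y z)
  exact LinearMap.congr_fun this w

theorem conv_rfl {a b : ℕ} (h1 : a = a) (h2 : b = b)
    (f : (⨂[k]^a V) →ₗ[k] ⨂[k]^b V) : conv h1 h2 f = f := by
  simp [conv]

theorem conv_conv {a b a' b' a'' b'' : ℕ} (h1 : a = a') (h2 : b = b') (h3 : a' = a'')
    (h4 : b' = b'') (f : (⨂[k]^a V) →ₗ[k] ⨂[k]^b V) :
    conv h3 h4 (conv h1 h2 f) = conv (h1.trans h3) (h2.trans h4) f := by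
  subst h1 h2 h3 h4; simp only [conv_rfl]

theorem conv_add {a b a' b' : ℕ} (h1 : a = a') (h2 : b = b')
    (f g : (⨂[k]^a V) →ₗ[k] ⨂[k]^b V) : conv h1 h2 (f + g) = conv h1 h2 f + conv h1 h2 g := by
  subst h1 h2; simp only [conv_rfl]

theorem conv_smul {a b a' b' : ℕ} (h1 : a = a') (h2 : b = b') (r : k)
    (f : (⨂[k]^a V) →ₗ[k] ⨂[k]^b V) : conv h1 h2 (r • f) = r • conv h1 h2 f := by
  subst h1 h2; simp only [conv_rfl]

theorem conv_zero {a b a' b' : ℕ} (h1 : a = a') (h2 : b = b') :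
    conv h1 h2 (0 : (⨂[k]^a V) →ₗ[k] ⨂[k]^b V) = 0 := by
  subst h1 h2; simp only [conv_rfl]

theorem conv_sum {a b a' b' : ℕ} (h1 : a = a') (h2 : b = b') {ι : Type*} (s : Finset ι)
    (f : ι → ((⨂[k]^a V) →ₗ[k] ⨂[k]^b V)) :
    conv h1 h2 (∑ i ∈ s, f i) = ∑ i ∈ s, conv h1 h2 (f i) := by
  subst h1 h2; simp only [conv_rfl]

/-- `tmap` as a bilinear map. -/
noncomputable def tmapL (a b c d : ℕ) : ((⨂[k]^a V) →ₗ[k] ⨂[k]^c V) →ₗ[k]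
    ((⨂[k]^b V) →ₗ[k] ⨂[k]^d V) →ₗ[k] ((⨂[k]^(a+b) V) →ₗ[k] ⨂[k]^(c+d) V) :=
  LinearMap.mk₂ k tmap
    (by intros; simp only [tmap, TensorProduct.map_add_left, LinearMap.add_comp, LinearMap.comp_add])
    (by intros; simp only [tmap, TensorProduct.map_smul_left, LinearMap.smul_comp,
          LinearMap.comp_smul])
    (by intros; simp only [tmap, TensorProduct.map_add_right, LinearMap.add_comp,
          LinearMap.comp_add])
    (by intros; simp only [tmap, TensorProduct.map_smul_right, LinearMap.smul_comp,
          LinearMap.comp_smul])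

theorem tmapL_apply {a b c d : ℕ} (f : (⨂[k]^a V) →ₗ[k] ⨂[k]^c V)
    (g : (⨂[k]^b V) →ₗ[k] ⨂[k]^d V) : tmap f g = tmapL a b c d f g := rfl

theorem tmap_conv_left {a b c d a' c' : ℕ} (h1 : a = a') (h2 : c = c')
    (f : (⨂[k]^a V) →ₗ[k] ⨂[k]^c V) (g : (⨂[k]^b V) →ₗ[k] ⨂[k]^d V) :
    tmap (conv h1 h2 f) g = conv (by omega) (by omega) (tmap f g) := by
  subst h1 h2; simp only [conv_rfl]

theorem tmap_conv_right {a b c d b' d' : ℕ} (h1 : b = b') (h2 : d = d')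
    (f : (⨂[k]^a V) →ₗ[k] ⨂[k]^c V) (g : (⨂[k]^b V) →ₗ[k] ⨂[k]^d V) :
    tmap f (conv h1 h2 g) = conv (by omega) (by omega) (tmap f g) := by
  subst h1 h2; simp only [conv_rfl]

theorem tmap_assoc {a b c a' b' c' : ℕ} (f : (⨂[k]^a V) →ₗ[k] ⨂[k]^a' V)
    (g : (⨂[k]^b V) →ₗ[k] ⨂[k]^b' V) (h : (⨂[k]^c V) →ₗ[k] ⨂[k]^c' V) :
    tmap (tmap f g) h = conv (by omega) (by omega) (tmap f (tmap g h)) := by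
  refine hom_ext3 (fun x y z => ?_)
  have e1 := TensorPower.mul_assoc x y z
  have e2 := TensorPower.mul_assoc (f x) (g y) (h z)
  simp only [TensorPower.gMul_def] at e1 e2
  rw [tmap_mul, tmap_mul]
  simp only [conv, LinearMap.comp_apply, LinearEquiv.coe_coe]
  rw [e1, tmap_mul, tmap_mul, ← e2, TensorPower.cast_cast, TensorPower.cast_refl]
  rfl

theorem pmap_tprod (f : V →ₗ[k] V) (n : ℕ) (v : Fin n → V) :
    pmap f n (tprod k v) = tprod k (fun i => f (v i)) := by
  simp [pmap]

theorem tmap_pmap (f : V →ₗ[k] V) (a b : ℕ) :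
    tmap (pmap f a) (pmap f b) = pmap f (a+b) := by
  have : tmap (pmap f a) (pmap f b) ∘ₗ (mulPow k V a b).toLinearMap
      = pmap f (a+b) ∘ₗ (mulPow k V a b).toLinearMap := by
    refine TensorProduct.ext ?_
    refine PiTensorProduct.ext (MultilinearMap.ext fun v => ?_)
    refine PiTensorProduct.ext (MultilinearMap.ext fun w => ?_)
    change tmap (pmap f a) (pmap f b) (mulPow k V a b (tprod k v ⊗ₜ tprod k w))
      = pmap f (a+b) (mulPow k V a b (tprod k v ⊗ₜ tprod k w))
    rw [tmap_mul, pmap_tprod, pmap_tprod]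
    have h1 := TensorPower.tprod_mul_tprod k v w
    have h2 := TensorPower.tprod_mul_tprod k (fun i => f (v i)) (fun i => f (w i))
    simp only [TensorPower.gMul_def] at h1 h2
    rw [h1, h2, pmap_tprod]
    congr 1
    funext i
    refine Fin.addCases (fun i => ?_) (fun i => ?_) i <;> simp
  refine hom_ext (fun x y => LinearMap.congr_fun this (x ⊗ₜ y))

theorem pmap_zero_one (f : V →ₗ[k] V) :
    pmap f 0 (tprod k (@Fin.elim0 V)) = tprod k (@Fin.elim0 V) := by
  rw [pmap_tprod]
  congr 1
  funext i
  exact i.elim0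

theorem tmap_pmap_zero {a b a' b' : ℕ} (f : (⨂[k]^a V) →ₗ[k] ⨂[k]^b V) (s : V →ₗ[k] V)
    (n : ℕ) (hn : n = 0) (h1 : a + n = a') (h2 : b + n = b') :
    conv h1 h2 (tmap f (pmap s n)) = conv (by omega) (by omega) f := by
  subst hn; subst h1 h2
  rw [conv_rfl]
  refine LinearMap.ext fun x => ?_
  have e1 := TensorPower.mul_one x
  have e2 := TensorPower.mul_one (f x)
  simp only [TensorPower.gMul_def, TensorPower.gOne_def, TensorPower.cast_refl] at e1 e2
  simp only [conv, LinearMap.comp_apply, LinearEquiv.coe_coe, TensorPower.cast_refl]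
  refine (congrArg (tmap f (pmap s 0)) e1.symm).trans ?_
  refine (tmap_mul f (pmap s 0) x _).trans ?_
  rw [pmap_zero_one]
  exact e2

theorem pmap_zero_tmap {a b a' b' : ℕ} (f : (⨂[k]^a V) →ₗ[k] ⨂[k]^b V) (s : V →ₗ[k] V)
    (n : ℕ) (hn : n = 0) (h1 : n + a = a') (h2 : n + b = b') :
    conv h1 h2 (tmap (pmap s n) f) = conv (by omega) (by omega) f := by
  subst hn; subst h1 h2
  rw [conv_rfl]
  refine LinearMap.ext fun w => ?_
  simp only [conv, LinearMap.comp_apply, LinearEquiv.coe_coe]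
  obtain ⟨x, rfl⟩ := (TensorPower.cast k V (zero_add a).symm).surjective w
  rw [TensorPower.cast_cast, TensorPower.cast_refl]
  have e1 := TensorPower.one_mul x
  have e2 := TensorPower.one_mul (f x)
  simp only [TensorPower.gMul_def, TensorPower.gOne_def] at e1 e2
  have e1' : TensorPower.cast k V (zero_add a).symm x
      = mulPow k V 0 a (tprod k (@Fin.elim0 V) ⊗ₜ x) := by
    conv_lhs => rw [← e1]
    rw [TensorPower.cast_cast, TensorPower.cast_refl]; rfl
  rw [e1', tmap_mul, pmap_zero_one]
  conv_rhs => rw [LinearEquiv.refl_apply, ← e2]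
  rw [TensorPower.cast_cast, TensorPower.cast_refl]; rfl

theorem idxR1 (d : ℕ) (i : Fin d) : (i : ℕ) + 1 + (d - ((i : ℕ)+1)) = d := by
  have := i.isLt; omega

theorem idxR2 (d : ℕ) (i : Fin d) : (i : ℕ) + 1 + 1 + (d - ((i : ℕ)+1)) = d + 1 := by
  have := i.isLt; omega

theorem idxL1 (d : ℕ) (i : Fin d) : (d - ((i : ℕ)+1)) + ((i : ℕ) + 1) = d := by
  have := i.isLt; omega

theorem idxL2 (d : ℕ) (i : Fin d) : (d - ((i : ℕ)+1)) + ((i : ℕ) + 1 + 1) = d + 1 := by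
  have := i.isLt; omega

/-- The left-hand sum. -/
noncomputable def Rsum (δr : (i : ℕ) → (⨂[k]^i V) →ₗ[k] ⨂[k]^(i+1) V) (d : ℕ) :
    (⨂[k]^d V) →ₗ[k] ⨂[k]^(d+1) V :=
  ∑ i : Fin d, ((-1 : k)^((i : ℕ)+1)) •
        conv (a' := d) (b' := d+1) (idxR1 d i) (idxR2 d i)
          (tmap (δr ((i : ℕ)+1)) (pmap (LinearMap.id) (d - ((i : ℕ)+1))))

/-- The right-hand sum. -/
noncomputable def Lsum (σ : V ≃ₗ[k] V) (δl : (i : ℕ) → (⨂[k]^i V) →ₗ[k] ⨂[k]^(i+1) V) (d : ℕ) :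
    (⨂[k]^d V) →ₗ[k] ⨂[k]^(d+1) V :=
  ∑ i : Fin d, ((-1 : k)^((i : ℕ)+1)) •
        conv (a' := d) (b' := d+1) (idxL1 d i) (idxL2 d i)
          (tmap (pmap σ.toLinearMap (d - ((i : ℕ)+1))) (δl ((i : ℕ)+1)))

theorem step_right {a b p q p' q' : ℕ} (f : (⨂[k]^a V) →ₗ[k] ⨂[k]^b V) (s : V →ₗ[k] V)
    (n m : ℕ) (hm : m = n + 1) (h1 : a + n = p) (h2 : b + n = q) (h3 : a + m = p')
    (h4 : b + m = q') :
    conv h3 h4 (tmap f (pmap s m))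
      = conv (by omega) (by omega) (tmap (conv h1 h2 (tmap f (pmap s n))) (pmap s 1)) := by
  subst hm; subst h1 h2 h3 h4
  simp only [conv_rfl, tmap_assoc, tmap_pmap, conv_conv]

theorem step_left {a b p q p' q' : ℕ} (f : (⨂[k]^a V) →ₗ[k] ⨂[k]^b V) (s : V →ₗ[k] V)
    (n m : ℕ) (hm : m = 1 + n) (h1 : n + a = p) (h2 : n + b = q) (h3 : m + a = p')
    (h4 : m + b = q') :
    conv h3 h4 (tmap (pmap s m) f)
      = conv (by omega) (by omega) (tmap (pmap s 1) (conv h1 h2 (tmap (pmap s n) f))) := by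
  subst hm; subst h1 h2 h3 h4
  rw [← tmap_pmap, tmap_assoc]
  simp only [conv_rfl, conv_conv]

theorem Rsum_succ (δr : (i : ℕ) → (⨂[k]^i V) →ₗ[k] ⨂[k]^(i+1) V) (d : ℕ) :
    Rsum δr (d+1) = tmap (Rsum δr d) (pmap LinearMap.id 1) + ((-1 : k)^(d+1)) • δr (d+1) := by
  rw [Rsum, Fin.sum_univ_castSucc]
  congr 1
  · rw [Rsum, tmapL_apply, map_sum, LinearMap.sum_apply]
    refine Finset.sum_congr rfl (fun i _ => ?_)
    rw [map_smul, LinearMap.smul_apply, ← tmapL_apply]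
    congr 1
    have := i.isLt
    refine (step_right _ _ (d - ((i : ℕ)+1)) _ ?_ ?_ ?_ _ _).trans (conv_rfl _ _ _)
    all_goals simp only [Fin.val_castSucc]; omega
  · congr 1
    refine (tmap_pmap_zero _ _ _ ?_ _ _).trans (conv_rfl _ _ _)
    simp

theorem Lsum_succ (σ : V ≃ₗ[k] V) (δl : (i : ℕ) → (⨂[k]^i V) →ₗ[k] ⨂[k]^(i+1) V) (d : ℕ) :
    Lsum σ δl (d+1) = conv (by omega) (by omega) (tmap (pmap σ.toLinearMap 1) (Lsum σ δl d))
      + ((-1 : k)^(d+1)) • δl (d+1) := by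
  rw [Lsum, Fin.sum_univ_castSucc]
  congr 1
  · rw [Lsum, tmapL_apply, map_sum, conv_sum]
    refine Finset.sum_congr rfl (fun i _ => ?_)
    rw [map_smul, conv_smul, ← tmapL_apply]
    congr 1
    have := i.isLt
    refine step_left _ _ (d - ((i : ℕ)+1)) _ ?_ ?_ ?_ _ _
    all_goals simp only [Fin.val_castSucc]; omega
  · congr 1
    refine (pmap_zero_tmap _ _ _ ?_ _ _).trans (conv_rfl _ _ _)
    simp

/-- `f ⊗ id`. -/
noncomputable def TR (d : ℕ) : ((⨂[k]^d V) →ₗ[k] ⨂[k]^(d+1) V) →ₗ[k]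
    ((⨂[k]^(d+1) V) →ₗ[k] ⨂[k]^(d+1+1) V) :=
  (tmapL d 1 (d+1) 1).flip (pmap LinearMap.id 1)

/-- `σ ⊗ f`. -/
noncomputable def TL (σ : V ≃ₗ[k] V) (d : ℕ) : ((⨂[k]^d V) →ₗ[k] ⨂[k]^(d+1) V) →ₗ[k]
    ((⨂[k]^(d+1) V) →ₗ[k] ⨂[k]^(d+1+1) V) where
  toFun f := conv (by omega) (by omega) (tmap (pmap σ.toLinearMap 1) f)
  map_add' f g := by rw [tmapL_apply, map_add, conv_add]; rfl
  map_smul' r f := by rw [tmapL_apply, map_smul, conv_smul]; rfl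

theorem TL_TR (σ : V ≃ₗ[k] V) (d : ℕ) (f : (⨂[k]^d V) →ₗ[k] ⨂[k]^(d+1) V) :
    TL σ (d+1) (TR d f) = TR (d+1) (TL σ d f) := by
  change conv (by omega) (by omega) (tmap (pmap σ.toLinearMap 1) (tmap f (pmap LinearMap.id 1)))
    = tmap (conv (by omega) (by omega) (tmap (pmap σ.toLinearMap 1) f)) (pmap LinearMap.id 1)
  rw [tmap_conv_left, tmap_assoc, conv_conv]

theorem sign_lemma {M : Type*} [AddCommGroup M] [Module k M] (d : ℕ) (a b c e x y p q r l : M)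
    (e1 : a = ((-1 : k)^(d+1+1)) • b) (e2 : c = ((-1 : k)^(d+1+1)) • e)
    (e3 : c = x + ((-1 : k)^(d+1)) • p) (e4 : b = y + ((-1 : k)^(d+1)) • q)
    (e5 : x = ((-1 : k)^(d+1)) • y)
    (e7 : r + ((-1 : k)^(d+2)) • l = p + ((-1 : k)^(d+2)) • q) :
    a + ((-1 : k)^(d+1+1)) • r = ((-1 : k)^(d+2+1)) • (e + ((-1 : k)^(d+1+1)) • l) := by
  simp only [pow_succ] at *
  rcases neg_one_pow_eq_or k d with h | h
  · rw [h] at e1 e2 e3 e4 e5 e7 ⊢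
    linear_combination (norm := module) e1 + e4 + e7 - e2 + e3 + e5
  · rw [h] at e1 e2 e3 e4 e5 e7 ⊢
    linear_combination (norm := module) e1 - e4 - e7 - e2 + e3 + e5

theorem key (σ : V ≃ₗ[k] V)
    (δr δl : (i : ℕ) → (⨂[k]^i V) →ₗ[k] ⨂[k]^(i+1) V)
    (hpair : SeqPairRec σ δr δl) (d : ℕ) :
    Rsum δr d = ((-1 : k)^(d+1)) • Lsum σ δl d := by
  have hR : ∀ d, Rsum δr (d+1) = TR d (Rsum δr d) + ((-1 : k)^(d+1)) • δr (d+1) :=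
    Rsum_succ δr
  have hL : ∀ d, Lsum σ δl (d+1) = TL σ d (Lsum σ δl d) + ((-1 : k)^(d+1)) • δl (d+1) :=
    Lsum_succ σ δl
  have hrec : ∀ d, δr (d+2) + ((-1 : k)^(d+2)) • δl (d+2)
      = TL σ (d+1) (δr (d+1)) + ((-1 : k)^(d+2)) • TR (d+1) (δl (d+1)) := by
    intro d
    refine (hpair.2 (d+2) (by omega)).trans ?_
    congr 2
    exact conv_rfl _ _ _
  have h0 : Rsum δr 0 = 0 := by simp [Rsum]
  have h0' : Lsum σ δl 0 = 0 := by simp [Lsum]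
  induction d using Nat.twoStepInduction with
  | zero => rw [h0, h0', smul_zero]
  | one => rw [hR, hL, h0, h0', map_zero, map_zero, hpair.1]; simp
  | more d ih1 ih2 =>
    have e1 := congrArg (TR (d+1)) ih2
    have e2 := congrArg (TL σ (d+1)) ih2
    have e3 := congrArg (TL σ (d+1)) (hR d)
    have e4 := congrArg (TR (d+1)) (hL d)
    have e5 := congrArg (fun x => TL σ (d+1) (TR d x)) ih1
    simp only [map_add, map_smul] at e1 e2 e3 e4 e5
    have e6 := TL_TR σ d (Lsum σ δl d)
    have e7 := hrec d
    rw [hR (d+1), hL (d+1)]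
    rw [← e6] at e4
    exact sign_lemma d _ _ _ _ _ _ _ _ _ _ e1 e2 e3 e4 e5 e7

/-- **Proposition 2.4(a)**: if `(δ_{i,r}, δ_{i,l})` satisfies the sequence-pair recurrence for
`σ`, then for every `d ≥ 1`,
`∑_{i=1}^{d} (−1)^i (δ_{i,r} ⊗ id_V^{⊗(d−i)}) = (−1)^{d+1} ∑_{i=1}^{d} (−1)^i (σ^{⊗(d−i)} ⊗ δ_{i,l})`
as linear maps `V^{⊗d} → V^{⊗(d+1)}`. -/
theorem prop_2_4_a (σ : V ≃ₗ[k] V)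
    (δr δl : (i : ℕ) → (⨂[k]^i V) →ₗ[k] ⨂[k]^(i+1) V)
    (hpair : SeqPairRec σ δr δl)
    (d : ℕ) (hd : 1 ≤ d) :
    (∑ i : Fin d, ((-1 : k)^((i : ℕ)+1)) •
        conv (a' := d) (b' := d+1) (by have := i.isLt; omega) (by have := i.isLt; omega)
          (tmap (δr ((i : ℕ)+1)) (pmap (LinearMap.id) (d - ((i : ℕ)+1)))))
    = ((-1 : k)^(d+1)) •
      ∑ i : Fin d, ((-1 : k)^((i : ℕ)+1)) •
        conv (a' := d) (b' := d+1) (by have := i.isLt; omega) (by have := i.isLt; omega)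
          (tmap (pmap σ.toLinearMap (d - ((i : ℕ)+1))) (δl ((i : ℕ)+1))) := by
  exact key σ δr δl hpair d

end OrePaper
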